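/- arXiv:2506.18360 — 2 statements merged into one kernel-verified Lean document; each statement's English description precedes it below -/
import Mathlib

section
/- Let (L, A, E) be a Lie triad over R and assume that at least one L-connection on E exists. Consider ι_B : End_R(E) → D_B(E), φ ↦ ((φ, 0)), and σ_B : D_B(E) → B = L/A, ((δ, x)) ↦ pr_B(x). Then σ_B is well defined, ι_B is injective, σ_B is surjective, the kernel of σ_B equals the image of ι_B, and both maps intertwine the flat A-connections: D_a(ι_B φ) = ι_B([∇̄_a, φ]) and σ_B(D_a ξ) = D_a(σ_B ξ) for all a ∈ A, φ ∈ End_R(E), ξ ∈ D_B(E), where D_a on B is the Bott connection and D_a on D_B(E) is the induced flat A-connection. (Thus the B-Atiyah sequence 0 → End_R(E) → D_B(E) → B → 0 is a short exact sequence of A-representations.) -/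
/-! The `B`-Atiyah sequence is the quotient of `0 → End_R(E) → D_L(E) → L` by the copy `j(A)` of `A`.
A class `((φ, 0))` vanishes only if `(φ, 0) = (∇̄_a, a)`, which forces `a = 0` and so `φ = 0`. An
`L`-connection `∇` splits `D_L(E) → L` by `x ↦ (∇_x, x)`, hence surjectivity. If `((δ, x))` maps to
zero then `x ∈ A`, and `(δ, x) - (∇̄_x, x) = (δ - ∇̄_x, 0)` has zero symbol, that is, `δ - ∇̄_x` is
`R`-linear. Compatibility with the flat connections is read off on representatives; the only input
is `⁅a, 0⁆ = 0`.

The binders `[AddCommGroup L]` and `[LieRing L]` give `L` two unrelated additions, and the bracket is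
biadditive for the second only. Zeros, sums, quotients and linear maps all refer to the first, so
`⁅a, 0⁆ = 0` is obtained from the Leibniz rule (`bracket_zero`) and not from `lie_zero`. Nothing
else about the interplay of the bracket and the addition is needed. -/

/-! Statement 12: the `B`-Atiyah sequence `0 → End_R(E) → D_B(E) → B → 0` of a Lie triad
`(L, A, E)` (with `E` admitting an `L`-connection) is a short exact sequence of
`A`-representations: `ι_B` is injective, `σ_B` is well defined and surjective,
`ker σ_B = im ι_B`, and both maps intertwine the flat `A`-connections. -/

variable (K : Type*) [Field K] (R : Type*) [CommRing R] [Algebra K R]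

/-- A Lie–Rinehart algebra structure on `L` over `R`, relative to the base field `K`. -/
structure LieRinehart (L : Type*) [AddCommGroup L] [Module K L] [Module R L]
    [IsScalarTower K R L] [LieRing L] [LieAlgebra K L] where
  ρ : L →ₗ[R] Derivation K R R
  ρ_lie : ∀ x y : L, ρ ⁅x, y⁆ = ⁅ρ x, ρ y⁆
  leibniz_rule : ∀ (x y : L) (r : R), ⁅x, r • y⁆ = r • ⁅x, y⁆ + ρ x r • y

section

variable (L : Type*) [AddCommGroup L] [Module K L] [Module R L]
    [IsScalarTower K R L] [LieRing L] [LieAlgebra K L]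
variable (E : Type*) [AddCommGroup E] [Module K E] [Module R E] [IsScalarTower K R E]

/-- An `L`-connection on `E`. -/
abbrev IsConnection (LR : LieRinehart K R L) (D : L →ₗ[R] Module.End K E) : Prop :=
  ∀ (x : L) (r : R) (e : E), D x (r • e) = r • D x e + LR.ρ x r • e

/-- The generalized Atiyah submodule of pairs `(δ, x)` whose symbol is `τ x`. -/
def genAtiyah (X : Type*) [AddCommGroup X] [Module R X] (τ : X →ₗ[R] Derivation K R R) :
    Submodule R (Module.End K E × X) where
  carrier := {p | ∀ (r : R) (e : E), p.1 (r • e) = r • p.1 e + τ p.2 r • e}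
  zero_mem' := by intro r e; simp
  add_mem' := by
    intro p q hp hq r e
    simp only [Prod.fst_add, Prod.snd_add, LinearMap.add_apply, map_add,
      Derivation.add_apply]
    rw [hp r e, hq r e, smul_add, add_smul]
    abel
  smul_mem' := by
    intro c p hp r e
    simp only [Prod.smul_fst, Prod.smul_snd, LinearMap.smul_apply, map_smul,
      Derivation.smul_apply]
    rw [hp r e, smul_add, smul_comm c r, smul_smul, smul_smul, smul_eq_mul]

/-- The canonical map `j : A → D_L(E)`, `a ↦ (∇̄_a, a)`, as an `R`-linear map. -/
def jmap (LR : LieRinehart K R L) (A : Submodule R L) (Db : A →ₗ[R] Module.End K E)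
    (hDb : ∀ (a : A) (r : R) (e : E), Db a (r • e) = r • Db a e + LR.ρ (a : L) r • e) :
    A →ₗ[R] ↥(genAtiyah K R E L LR.ρ) where
  toFun a := ⟨(Db a, (a : L)), fun r e => hDb a r e⟩
  map_add' a b := Subtype.ext (by simp [Prod.ext_iff])
  map_smul' c a := Subtype.ext (by simp [Prod.ext_iff])

/-- The `B`-Atiyah extension `D_B(E) = D_L(E)/j(A)`. -/
abbrev AtiyahExt (LR : LieRinehart K R L) (A : Submodule R L)
    (Db : A →ₗ[R] Module.End K E)
    (hDb : ∀ (a : A) (r : R) (e : E), Db a (r • e) = r • Db a e + LR.ρ (a : L) r • e) :=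
  ↥(genAtiyah K R E L LR.ρ) ⧸ LinearMap.range (jmap K R L E LR A Db hDb)

variable {K R L E}

/-- The bracket kills the zero of the `R`-module `L`: apply the Leibniz rule to `0 • 0`. -/
lemma LieRinehart.bracket_zero (LR : LieRinehart K R L) (x : L) : ⁅x, (0 : L)⁆ = 0 := by
  have h := LR.leibniz_rule x 0 0
  rwa [zero_smul, zero_smul, map_zero, zero_smul, add_zero] at h

/-- `φ ↦ (φ, 0)`, the lift of `ι_B` to the `L`-Atiyah module. -/
def endToAtiyah (LR : LieRinehart K R L) (φ : Module.End R E) : ↥(genAtiyah K R E L LR.ρ) :=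
  ⟨(LinearMap.restrictScalars K φ, (0 : L)), fun r e => by simp⟩

/-- A pair `(δ, 0)` in the Atiyah module is of the form `(φ, 0)` with `φ` an `R`-linear map. -/
lemma exists_endToAtiyah_eq (LR : LieRinehart K R L) (p : ↥(genAtiyah K R E L LR.ρ))
    (hp : (p : Module.End K E × L).2 = 0) : ∃ φ : Module.End R E, endToAtiyah LR φ = p := by
  refine ⟨{ toFun := (p : Module.End K E × L).1
            map_add' := map_add _
            map_smul' := fun r e => ?_ }, ?_⟩
  · have h := p.2 r e
    simpa [hp] using h
  · exact Subtype.ext (Prod.ext rfl hp.symm)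

/-- The anchor of the `B`-Atiyah extension, `((δ, x)) ↦ pr_B x`. -/
def atiyahSymbol (LR : LieRinehart K R L) (A : Submodule R L) (Db : A →ₗ[R] Module.End K E)
    (hDb : ∀ (a : A) (r : R) (e : E), Db a (r • e) = r • Db a e + LR.ρ (a : L) r • e) :
    AtiyahExt K R L E LR A Db hDb →ₗ[R] L ⧸ A :=
  Submodule.liftQ _
    (A.mkQ ∘ₗ LinearMap.snd R (Module.End K E) L ∘ₗ (genAtiyah K R E L LR.ρ).subtype) (by
      rintro _ ⟨a, rfl⟩
      exact (Submodule.Quotient.mk_eq_zero A).2 a.2)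

variable (K R L E)

theorem atiyah_sequence_short_exact (LR : LieRinehart K R L)
    (A : Submodule R L) (hA : ∀ x ∈ A, ∀ y ∈ A, ⁅x, y⁆ ∈ A)
    (Db : A →ₗ[R] Module.End K E)
    (hDbLeib : ∀ (a : A) (r : R) (e : E),
      Db a (r • e) = r • Db a e + LR.ρ (a : L) r • e)
    (hDbFlat : ∀ (a b : A) (h : ⁅(a : L), (b : L)⁆ ∈ A),
      Db ⟨⁅(a : L), (b : L)⁆, h⟩ = Db a ∘ₗ Db b - Db b ∘ₗ Db a)
    (hconn : ∃ D : L →ₗ[R] Module.End K E, IsConnection K R L E LR D) :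
    ∃ (ι : Module.End R E → AtiyahExt K R L E LR A Db hDbLeib)
      (σB : AtiyahExt K R L E LR A Db hDbLeib → L ⧸ A),
      -- `ι_B φ = ((φ, 0))`
      (∀ φ : Module.End R E, ∃ q : ↥(genAtiyah K R E L LR.ρ),
        ((q : Module.End K E × L) = (LinearMap.restrictScalars K φ, (0 : L))) ∧
        ι φ = Submodule.Quotient.mk q) ∧
      -- `σ_B ((δ, x)) = pr_B x` is well defined
      (∀ p : ↥(genAtiyah K R E L LR.ρ),
        σB (Submodule.Quotient.mk p) =
          Submodule.Quotient.mk (p : Module.End K E × L).2) ∧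
      -- exactness
      Function.Injective ι ∧
      Function.Surjective σB ∧
      (∀ u : AtiyahExt K R L E LR A Db hDbLeib,
        σB u = 0 ↔ ∃ φ : Module.End R E, ι φ = u) ∧
      -- both maps intertwine the flat `A`-connections
      (∀ Dc : A → AtiyahExt K R L E LR A Db hDbLeib → AtiyahExt K R L E LR A Db hDbLeib,
        (∀ (a : A) (p : ↥(genAtiyah K R E L LR.ρ)),
          ∃ q : ↥(genAtiyah K R E L LR.ρ),
            ((q : Module.End K E × L) =
              (⁅Db a, (p : Module.End K E × L).1⁆,
                ⁅(a : L), (p : Module.End K E × L).2⁆)) ∧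
            Dc a (Submodule.Quotient.mk p) = Submodule.Quotient.mk q) →
        (∀ (a : A) (φ : Module.End R E),
          ∃ ψ : Module.End R E,
            (LinearMap.restrictScalars K ψ = ⁅Db a, LinearMap.restrictScalars K φ⁆) ∧
            Dc a (ι φ) = ι ψ) ∧
        (∀ DBott : A → Module.End K (L ⧸ A),
          (∀ (a : A) (x : L),
            DBott a (Submodule.Quotient.mk x) = Submodule.Quotient.mk ⁅(a : L), x⁆) →
          ∀ (a : A) (u : AtiyahExt K R L E LR A Db hDbLeib),
            σB (Dc a u) = DBott a (σB u))) := by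
  obtain ⟨D, hD⟩ := hconn
  refine ⟨fun φ => Submodule.Quotient.mk (endToAtiyah LR φ), atiyahSymbol LR A Db hDbLeib,
    fun φ => ⟨_, rfl, rfl⟩, fun p => rfl, ?_, ?_, ?_, ?_⟩
  · intro φ ψ h
    obtain ⟨a, ha⟩ := (Submodule.Quotient.eq _).1 h
    have ha' : (Db a, (a : L)) = ((LinearMap.restrictScalars K φ, (0 : L)) -
        (LinearMap.restrictScalars K ψ, (0 : L)) : Module.End K E × L) :=
      congrArg Subtype.val ha
    have h2 : (a : L) = 0 := (congrArg Prod.snd ha').trans (sub_self 0)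
    have h0 : a = 0 := Subtype.ext h2
    have h1 : Db a = LinearMap.restrictScalars K φ - LinearMap.restrictScalars K ψ :=
      congrArg Prod.fst ha'
    rw [h0, map_zero] at h1
    exact LinearMap.restrictScalars_injective K (sub_eq_zero.1 h1.symm)
  · intro b
    obtain ⟨x, rfl⟩ := Submodule.Quotient.mk_surjective _ b
    exact ⟨Submodule.Quotient.mk ⟨(D x, x), fun r e => hD x r e⟩, rfl⟩
  · intro u
    constructor
    · obtain ⟨p, rfl⟩ := Submodule.Quotient.mk_surjective _ u
      intro h
      have hx : (p : Module.End K E × L).2 ∈ A := (Submodule.Quotient.mk_eq_zero A).1 h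
      obtain ⟨φ, hφ⟩ := exists_endToAtiyah_eq LR
        (p - jmap K R L E LR A Db hDbLeib ⟨_, hx⟩) (sub_self _)
      refine ⟨φ, ?_⟩
      dsimp only
      rw [hφ]
      refine (Submodule.Quotient.eq _).2 ?_
      rw [sub_sub_cancel_left]
      exact Submodule.neg_mem _ ⟨_, rfl⟩
    · rintro ⟨φ, rfl⟩
      exact (Submodule.Quotient.mk_eq_zero A).2 A.zero_mem
  · intro Dc hDc
    refine ⟨fun a φ => ?_, fun DBott hB a u => ?_⟩
    · obtain ⟨q, hq, hqD⟩ := hDc a (endToAtiyah LR φ)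
      obtain ⟨ψ, hψ⟩ := exists_endToAtiyah_eq LR q
        ((congrArg Prod.snd hq).trans (LR.bracket_zero _))
      refine ⟨ψ, ?_, ?_⟩
      · exact (congrArg (fun p => (Subtype.val p).1) hψ).trans (congrArg Prod.fst hq)
      · dsimp only
        rw [hqD, hψ]
    · obtain ⟨p, rfl⟩ := Submodule.Quotient.mk_surjective _ u
      obtain ⟨q, hq, hqD⟩ := hDc a p
      rw [hqD]
      refine Eq.trans ?_ (hB a (p : Module.End K E × L).2).symm
      exact congrArg (fun z : Module.End K E × L => (Submodule.Quotient.mk z.2 : L ⧸ A)) hq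

end
end

section
/- Let (L, A, E) be a Lie triad over R. If ∇ and ∇' are two A-compatible L-connections on E extending ∇̄, then for each x ∈ L the endomorphism ∇'_x − ∇_x lies in End_R(E) and depends only on pr_B(x), and the resulting R-linear map φ : B → End_R(E) is A-invariant: [∇̄_a, φ(b)] = φ(D_a b) for all a ∈ A, b ∈ B, where D is the Bott connection. Conversely, if ∇ is an A-compatible L-connection extending ∇̄ and φ : B → End_R(E) is R-linear and A-invariant in this sense, then x ↦ ∇_x + φ(pr_B x) is again an A-compatible L-connection extending ∇̄. -/
/-! The anchor term `ρ(x)(r) e` in the Leibniz rule is the same for every connection, so it cancels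
in `D' x - D x`, which is therefore `R`-linear. This difference vanishes on `A`, because both
connections restrict to `Db` there, so it descends to `L ⧸ A`. For `a ∈ A`, vanishing of the
curvature at `(a, x)` says `D ⁅a, x⁆ = ⁅Db a, D x⁆`, a condition affine in `D`: subtracting it
for two connections gives invariance of the difference, and adding an invariant `φ` to a
compatible connection preserves it. -/

/-! Statement 17: two `A`-compatible `L`-connections extending `∇̄` differ by an
`A`-invariant `R`-linear map `B → End_R(E)`, and conversely translating an `A`-compatible
extension by such a map gives again an `A`-compatible extension. -/

variable (K : Type*) [Field K] (R : Type*) [CommRing R] [Algebra K R]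

section

variable (L : Type*) [AddCommGroup L] [Module K L] [Module R L]
    [IsScalarTower K R L] [LieRing L] [LieAlgebra K L]
variable (E : Type*) [AddCommGroup E] [Module K E] [Module R E] [IsScalarTower K R E]

/-- The curvature of a connection. -/
def curvature (D : L →ₗ[R] Module.End K E) (x y : L) : Module.End K E :=
  D x ∘ₗ D y - D y ∘ₗ D x - D ⁅x, y⁆

theorem compatible_connections_affine_over_invariants (LR : LieRinehart K R L)
    (A : Submodule R L) (hA : ∀ x ∈ A, ∀ y ∈ A, ⁅x, y⁆ ∈ A)
    (Db : A →ₗ[R] Module.End K E)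
    (hDbLeib : ∀ (a : A) (r : R) (e : E),
      Db a (r • e) = r • Db a e + LR.ρ (a : L) r • e)
    (hDbFlat : ∀ (a b : A) (h : ⁅(a : L), (b : L)⁆ ∈ A),
      Db ⟨⁅(a : L), (b : L)⁆, h⟩ = Db a ∘ₗ Db b - Db b ∘ₗ Db a)
    (D D' : L →ₗ[R] Module.End K E)
    (hD : IsConnection K R L E LR D) (hD' : IsConnection K R L E LR D')
    (hDext : ∀ a : A, D (a : L) = Db a) (hD'ext : ∀ a : A, D' (a : L) = Db a)
    (hDcomp : ∀ (a : A) (x : L), curvature K R L E D (a : L) x = 0)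
    (hD'comp : ∀ (a : A) (x : L), curvature K R L E D' (a : L) x = 0) :
    -- each difference `D'_x − D_x` is `R`-linear
    (∀ (x : L) (r : R) (e : E), (D' x - D x) (r • e) = r • ((D' x - D x) e)) ∧
    -- the difference depends only on `pr_B x`
    (∀ x x' : L, (Submodule.Quotient.mk x : L ⧸ A) = Submodule.Quotient.mk x' →
      D' x - D x = D' x' - D x') ∧
    -- the resulting `R`-linear map `φ : B → End_R(E)` is `A`-invariant
    (∃ φ : (L ⧸ A) →ₗ[R] Module.End R E,
      (∀ x : L,
        LinearMap.restrictScalars K (φ (Submodule.Quotient.mk x)) = D' x - D x) ∧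
      (∀ (a : A) (x : L),
        ⁅Db a, LinearMap.restrictScalars K (φ (Submodule.Quotient.mk x))⁆ =
          LinearMap.restrictScalars K (φ (Submodule.Quotient.mk ⁅(a : L), x⁆)))) ∧
    -- conversely, translating by an `A`-invariant `φ` yields again an `A`-compatible
    -- `L`-connection extending `∇̄`
    (∀ φ : (L ⧸ A) →ₗ[R] Module.End R E,
      (∀ (a : A) (x : L),
        ⁅Db a, LinearMap.restrictScalars K (φ (Submodule.Quotient.mk x))⁆ =
          LinearMap.restrictScalars K (φ (Submodule.Quotient.mk ⁅(a : L), x⁆))) →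
      ∃ D'' : L →ₗ[R] Module.End K E,
        IsConnection K R L E LR D'' ∧ (∀ a : A, D'' (a : L) = Db a) ∧
        (∀ (a : A) (x : L), curvature K R L E D'' (a : L) x = 0) ∧
        ∀ x : L,
          D'' x = D x + LinearMap.restrictScalars K (φ (Submodule.Quotient.mk x))) := by
  have lin : ∀ (x : L) (r : R) (e : E), (D' x - D x) (r • e) = r • ((D' x - D x) e) := by
    intro x r e
    simp only [LinearMap.sub_apply, hD x r e, hD' x r e, smul_sub]
    abel
  -- Zero curvature at `(a, x)`, read as a formula for `D ⁅a, x⁆` affine in `D`.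
  have brD : ∀ (a : A) (x : L), D ⁅(a : L), x⁆ = ⁅Db a, D x⁆ := by
    intro a x
    have h := hDcomp a x
    rw [curvature, hDext, sub_eq_zero] at h
    exact h.symm
  have brD' : ∀ (a : A) (x : L), D' ⁅(a : L), x⁆ = ⁅Db a, D' x⁆ := by
    intro a x
    have h := hD'comp a x
    rw [curvature, hD'ext, sub_eq_zero] at h
    exact h.symm
  -- The difference `D' - D` with values in `End_R(E)`, before descending to `L ⧸ A`.
  let f : L →ₗ[R] Module.End R E :=
    { toFun := fun x =>
        { toFun := fun e => (D' x - D x) e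
          map_add' := (D' x - D x).map_add
          map_smul' := lin x }
      map_add' := fun x y => by
        ext e
        change (D' (x + y) - D (x + y)) e = (D' x - D x) e + (D' y - D y) e
        simp only [map_add, LinearMap.sub_apply, LinearMap.add_apply]
        abel
      map_smul' := fun r x => by
        ext e
        change (D' (r • x) - D (r • x)) e = r • (D' x - D x) e
        simp only [map_smul, LinearMap.sub_apply, LinearMap.smul_apply, smul_sub] }
  have hf : A ≤ LinearMap.ker f := by
    intro a ha
    rw [LinearMap.mem_ker]
    ext e
    change (D' a - D a) e = 0
    rw [hDext ⟨a, ha⟩, hD'ext ⟨a, ha⟩, sub_self, LinearMap.zero_apply]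
  have hφ : ∀ x : L, LinearMap.restrictScalars K
      (A.liftQ f hf (Submodule.Quotient.mk x)) = D' x - D x := fun x => rfl
  refine ⟨lin, ?_, ⟨A.liftQ f hf, hφ, ?_⟩, ?_⟩
  · intro x x' h
    rw [← hφ x, ← hφ x', h]
  · intro a x
    rw [hφ, hφ, brD, brD']
    simp only [Ring.lie_def]
    noncomm_ring
  · intro φ hinv
    -- The translation term `x ↦ φ (pr_B x)`, viewed with values in `End_K(E)`.
    let g : L →ₗ[R] Module.End K E :=
      { toFun := fun x => LinearMap.restrictScalars K (φ (Submodule.Quotient.mk x))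
        map_add' := fun x y => by
          rw [Submodule.Quotient.mk_add, map_add]; rfl
        map_smul' := fun r x => by
          rw [Submodule.Quotient.mk_smul, map_smul]; rfl }
    have hg : ∀ x, g x = LinearMap.restrictScalars K (φ (Submodule.Quotient.mk x)) :=
      fun _ => rfl
    have hgA : ∀ a : A, g a = 0 := by
      intro a
      rw [hg, (Submodule.Quotient.mk_eq_zero A).mpr a.2, map_zero]; rfl
    have hext : ∀ a : A, (D + g) (a : L) = Db a := by
      intro a
      rw [LinearMap.add_apply, hgA, add_zero, hDext]
    refine ⟨D + g, ?_, hext, ?_, fun x => rfl⟩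
    · intro x r e
      have h : g x (r • e) = r • g x e := map_smul (φ (Submodule.Quotient.mk x)) r e
      simp only [LinearMap.add_apply, hD x r e, h, smul_add]
      abel
    · intro a x
      rw [curvature, hext, sub_eq_zero]
      change ⁅Db a, (D + g) x⁆ = _
      rw [LinearMap.add_apply, LinearMap.add_apply, brD, hg, hg, ← hinv]
      simp only [Ring.lie_def]
      noncomm_ring

end
end
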